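/- Let Φ be a finite NCIFS that is subexponentially bounded, i.e. lim_{n→∞} (1/n) log #I^(n) = 0. Then Bowen's formula holds: HD(J(Φ)) = B(Φ). -/

import Mathlib

open Metric Set Filter Topology MeasureTheory
open scoped ENNReal

noncomputable section

/-- A non-autonomous conformal iterated function system (NCIFS) on a compact subset `X` of
`ℝ^d`, encoded via the composed maps `wMap m n ω` associated with finite words `ω` occupying
levels `m, m+1, …, n-1`, together with their conformal derivative norms `segN m n ω = ‖Dφ_ω‖`.
The fields record the standing assumptions: the open set condition, bounded distortion with
constant `K` (both for derivative norms of split words and as two-sided Lipschitz bounds),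
and uniform contraction with constant `η < 1`. -/
structure NCIFS (d : ℕ) where
  X : Set (EuclideanSpace ℝ (Fin d))
  hX_compact : IsCompact X
  hX_nonempty : X.Nonempty
  hX_regular : closure (interior X) = X
  hX_convex : Convex ℝ X
  I : ℕ → Type
  hI_ne : ∀ n, Nonempty (I n)
  K : ℝ
  hK : 1 ≤ K
  η : ℝ
  hη_pos : 0 < η
  hη_lt : η < 1
  /-- `segN m n ω` is the derivative norm `‖Dφ_ω‖` of the word `ω` on levels `m, …, n-1`. -/
  segN : (m n : ℕ) → ((j : Finset.Ico m n) → I j) → ℝ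
  segN_pos : ∀ m n ω, 0 < segN m n ω
  /-- uniform contraction -/
  segN_contract : ∀ m n ω, segN m n ω ≤ η ^ (n - m)
  /-- submultiplicativity and bounded distortion for derivative norms of split words -/
  segN_split : ∀ m k n, m ≤ k → k ≤ n →
      ∀ (ω : (j : Finset.Ico m n) → I j) (ω₁ : (j : Finset.Ico m k) → I j)
        (ω₂ : (j : Finset.Ico k n) → I j),
        (∀ (j : ℕ) (h₁ : j ∈ Finset.Ico m k) (h₂ : j ∈ Finset.Ico m n),
            ω₁ ⟨j, h₁⟩ = ω ⟨j, h₂⟩) →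
        (∀ (j : ℕ) (h₁ : j ∈ Finset.Ico k n) (h₂ : j ∈ Finset.Ico m n),
            ω₂ ⟨j, h₁⟩ = ω ⟨j, h₂⟩) →
        segN m n ω ≤ segN m k ω₁ * segN k n ω₂ ∧
          segN m k ω₁ * segN k n ω₂ ≤ K * segN m n ω
  /-- the conformal contraction associated to the word `ω` on levels `m, …, n-1` -/
  wMap : (m n : ℕ) → ((j : Finset.Ico m n) → I j) →
      EuclideanSpace ℝ (Fin d) → EuclideanSpace ℝ (Fin d)
  wMap_id : ∀ m (ω : (j : Finset.Ico m m) → I j) x, wMap m m ω x = x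
  wMap_mapsTo : ∀ m n ω, MapsTo (wMap m n ω) X X
  /-- upper conformal bound: `φ_ω` is `‖Dφ_ω‖`-Lipschitz on `X` -/
  wMap_lip : ∀ m n ω, ∀ x ∈ X, ∀ y ∈ X,
      dist (wMap m n ω x) (wMap m n ω y) ≤ segN m n ω * dist x y
  /-- lower conformal bound (bounded distortion) -/
  wMap_colip : ∀ m n ω, ∀ x ∈ X, ∀ y ∈ X,
      segN m n ω / K * dist x y ≤ dist (wMap m n ω x) (wMap m n ω y)
  /-- compatibility of the maps under splitting of words -/
  wMap_comp : ∀ m k n, m ≤ k → k ≤ n →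
      ∀ (ω : (j : Finset.Ico m n) → I j) (ω₁ : (j : Finset.Ico m k) → I j)
        (ω₂ : (j : Finset.Ico k n) → I j),
        (∀ (j : ℕ) (h₁ : j ∈ Finset.Ico m k) (h₂ : j ∈ Finset.Ico m n),
            ω₁ ⟨j, h₁⟩ = ω ⟨j, h₂⟩) →
        (∀ (j : ℕ) (h₁ : j ∈ Finset.Ico k n) (h₂ : j ∈ Finset.Ico m n),
            ω₂ ⟨j, h₁⟩ = ω ⟨j, h₂⟩) →
        ∀ x ∈ X, wMap m n ω x = wMap m k ω₁ (wMap k n ω₂ x)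
  /-- the open set condition -/
  osc : ∀ n (a b : (j : Finset.Ico n (n+1)) → I j), a ≠ b →
      Disjoint (wMap n (n+1) a '' interior X) (wMap n (n+1) b '' interior X)

namespace NCIFS

variable {d : ℕ} (Φ : NCIFS d)

/-- Words occupying levels `m, …, n-1`. -/
abbrev Word (m n : ℕ) := (j : Finset.Ico m n) → Φ.I j

instance (m n : ℕ) : Nonempty (Φ.Word m n) :=
  ⟨fun j => Classical.choice (Φ.hI_ne j)⟩

/-- The one-letter word at level `n` given by the index `i`. -/
def single (n : ℕ) (i : Φ.I n) : Φ.Word n (n+1) :=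
  fun j => cast (congrArg Φ.I (show n = (j : ℕ) by
    have := Finset.mem_Ico.mp j.2; omega)) i

/-- `‖Dφ_i^{(n)}‖`, the derivative norm of the single map with index `i` at level `n`. -/
def Dnorm (n : ℕ) (i : Φ.I n) : ℝ := Φ.segN n (n+1) (Φ.single n i)

/-- The partition function `Z_n(t) = Σ_{ω ∈ I^n} ‖Dφ_ω‖^t`, valued in `[0,∞]`. -/
def Z (n : ℕ) (t : ℝ) : ℝ≥0∞ := ∑' ω : Φ.Word 0 n, ENNReal.ofReal (Φ.segN 0 n ω ^ t)

/-- The lower pressure `P̲(t) = liminf (1/n) log Z_n(t)`, valued in `[-∞,∞]`. -/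
def lowP (t : ℝ) : EReal :=
  liminf (fun n : ℕ => (Φ.Z n t).log * (((n : ℝ)⁻¹ : ℝ) : EReal)) atTop

/-- The upper pressure `P̄(t) = limsup (1/n) log Z_n(t)`. -/
def upP (t : ℝ) : EReal :=
  limsup (fun n : ℕ => (Φ.Z n t).log * (((n : ℝ)⁻¹ : ℝ) : EReal)) atTop

/-- The Bowen dimension `B(Φ) = sup {t ≥ 0 : P̲(t) > 0}` (and `0` if there is no such `t`). -/
def Bdim : ℝ≥0∞ := ⨆ t : {t : ℝ // 0 ≤ t ∧ (0 : EReal) < Φ.lowP t}, ENNReal.ofReal t.1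

/-- The limit set `J(Φ) = ⋂_n ⋃_{ω ∈ I^n} φ_ω(X)`. -/
def limitSet : Set (EuclideanSpace ℝ (Fin d)) :=
  ⋂ n, ⋃ ω : Φ.Word 0 n, Φ.wMap 0 n ω '' Φ.X

/-- The minimal derivative norm `c̲_n` at level `n`. -/
def cmin (n : ℕ) : ℝ := ⨅ i : Φ.I n, Φ.Dnorm n i

/-- The maximal derivative norm `c̄_n` at level `n`. -/
def cmax (n : ℕ) : ℝ := ⨆ i : Φ.I n, Φ.Dnorm n i

/-- `ρ_n`, the maximal ratio of derivative norms at level `n`. -/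
def ρ (n : ℕ) : ℝ := Φ.cmax n / Φ.cmin n

/-- The modified partition function
`Z̃_n(t) = Z_{n-1}(t) · (#I^{(n)})^{t/d} · c̲_n^t`. -/
def Zt (n : ℕ) (t : ℝ) : ℝ≥0∞ :=
  Φ.Z (n - 1) t * ENNReal.ofReal ((Nat.card (Φ.I n) : ℝ) ^ (t / (d : ℝ)) * Φ.cmin n ^ t)

/-- `P̃(t) = liminf (1/n) log Z̃_n(t)`. -/
def tP (t : ℝ) : EReal :=
  liminf (fun n : ℕ => (Φ.Zt n t).log * (((n : ℝ)⁻¹ : ℝ) : EReal)) atTop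

end NCIFS

/-!
Upper bound: the cells `φ_ω(X)`, `ω ∈ I^n`, cover the limit set and have diameters comparable to
`‖Dφ_ω‖`, so `∑_ω ‖Dφ_ω‖^t = Z_n(t)` controls the `t`-dimensional Hausdorff measure; uniform
contraction makes `Z_n(t) ≤ 1` infinitely often as soon as `P̲(s) ≤ 0` for some `s < t`.

Lower bound: let `P̲(t) > 0` and put mass `‖Dφ_ω‖^t / Z_n(t)` on the cell of each `ω ∈ I^n`. Given
`ball x r`, cut every `ω` whose cell meets it at the first level `k + 1` where the derivative norm
drops to `r` or below. By the open set condition and a volume count there are boundedly many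
parents at level `k`, hence `O(#I^(k))` cut words, and by bounded distortion the words extending
one of them have total mass `O(r^t / Z_{k+1}(t))`. The mass of the ball is therefore `O(r^t)`
provided `∑_k #I^(k) / Z_{k+1}(t) < ∞`, which holds since `Z_k(t)` grows exponentially and `#I^(k)`
subexponentially. This Frostman bound is available down to scale `η^n`, which is enough because a
cover of the compact limit set can be taken finite.
-/

section HausdorffMeasure

variable {X Y : Type*} [MetricSpace X]

lemma exists_pos_subset_ball_rpow_le [Nonempty X] {u : Set X} (hu : ediam u ≠ ∞) {t : ℝ}
    (ht : 0 < t) {e : ℝ≥0∞} (he : e ≠ 0) :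
    ∃ (x : X) (r : ℝ), 0 < r ∧ u ⊆ ball x r ∧
      ENNReal.ofReal (r ^ t) ≤ (⨆ _ : u.Nonempty, ediam u ^ t) + e := by
  have hcont : Tendsto (fun r : ℝ => ENNReal.ofReal (r ^ t)) (𝓝[>] diam u)
      (𝓝 (ENNReal.ofReal (diam u ^ t))) :=
    (ENNReal.tendsto_ofReal (Real.continuousAt_rpow_const _ _ (Or.inr ht.le))).mono_left
      nhdsWithin_le_nhds
  obtain ⟨r, hre, hdiam⟩ := ((hcont.eventually_lt_const
    (ENNReal.lt_add_right ENNReal.ofReal_ne_top he)).and self_mem_nhdsWithin).exists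
  have hr : 0 < r := diam_nonneg.trans_lt hdiam
  rcases u.eq_empty_or_nonempty with rfl | hne
  · refine ⟨Classical.arbitrary X, r, hr, empty_subset _, ?_⟩
    simpa [Real.zero_rpow ht.ne'] using hre.le
  · obtain ⟨x, hx⟩ := hne
    refine ⟨x, r, hr, fun y hy => ?_, ?_⟩
    · exact (dist_le_diam_of_mem (isBounded_iff_ediam_ne_top.mpr hu) hy hx).trans_lt hdiam
    · rw [iSup_pos ⟨x, hx⟩, ← ENNReal.ofReal_toReal hu,
        ENNReal.ofReal_rpow_of_nonneg ENNReal.toReal_nonneg ht.le]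
      exact hre.le

variable [MeasurableSpace X] [BorelSpace X]

lemma ofReal_rpow_mul_hausdorffMeasure_le_image [MetricSpace Y] [MeasurableSpace Y] [BorelSpace Y]
    {f : X → Y} {s : Set X} {c p : ℝ} (hc : 0 < c) (hp : 0 ≤ p)
    (hf : ∀ x ∈ s, ∀ y ∈ s, c * dist x y ≤ dist (f x) (f y)) :
    ENNReal.ofReal (c ^ p) * μH[p] s ≤ μH[p] (f '' s) := by
  have hanti : AntilipschitzWith (Real.toNNReal c⁻¹) (s.domRestrict f) := by
    refine AntilipschitzWith.of_le_mul_dist fun x y => ?_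
    rw [Real.coe_toNNReal _ (inv_pos.mpr hc).le, inv_mul_eq_div, le_div_iff₀' hc]
    exact hf x x.2 y y.2
  have himage : μH[p] s ≤ ENNReal.ofReal c⁻¹ ^ p * μH[p] (f '' s) := by
    have hsubtype := (isometry_subtype_coe (s := s)).hausdorffMeasure_image (Or.inl hp) univ
    rw [image_univ, Subtype.range_coe] at hsubtype
    rw [hsubtype, ← range_domRestrict, ← image_univ]
    exact hanti.le_hausdorffMeasure_image hp univ
  calc ENNReal.ofReal (c ^ p) * μH[p] s
      ≤ ENNReal.ofReal (c ^ p) * (ENNReal.ofReal c⁻¹ ^ p * μH[p] (f '' s)) := by gcongr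
    _ = μH[p] (f '' s) := by
      rw [← mul_assoc, ← ENNReal.ofReal_rpow_of_pos hc, ← ENNReal.mul_rpow_of_nonneg _ _ hp,
        ← ENNReal.ofReal_mul hc.le, mul_inv_cancel₀ hc.ne', ENNReal.ofReal_one,
        ENNReal.one_rpow, one_mul]

lemma exists_ball_cover_of_hausdorffMeasure_eq_zero [Nonempty X] {s : Set X} {t : ℝ} (ht : 0 < t)
    (hs : μH[t] s = 0) {ε : ℝ≥0∞} (hε : ε ≠ 0) :
    ∃ (x : ℕ → X) (r : ℕ → ℝ), (∀ k, 0 < r k) ∧ s ⊆ ⋃ k, ball (x k) (r k) ∧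
      ∑' k, ENNReal.ofReal (r k ^ t) ≤ ε := by
  have hε2 : ε / 2 ≠ 0 := by simpa using hε
  have hlt : (⨅ (u : ℕ → Set X) (_ : s ⊆ ⋃ n, u n) (_ : ∀ n, ediam (u n) ≤ 1),
      ∑' n, ⨆ _ : (u n).Nonempty, ediam (u n) ^ t) < ε / 2 := by
    refine lt_of_le_of_lt ?_ (pos_iff_ne_zero.mpr hε2)
    rw [← hs, Measure.hausdorffMeasure_apply]
    exact le_iSup₂_of_le (1 : ℝ≥0∞) one_pos le_rfl
  simp only [iInf_lt_iff] at hlt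
  obtain ⟨u, hcover, hdiam, hsum⟩ := hlt
  obtain ⟨e, he, hesum⟩ := ENNReal.exists_pos_sum_of_countable' hε2 ℕ
  choose x r hr hsub hle using fun k => exists_pos_subset_ball_rpow_le
    (ne_top_of_le_ne_top ENNReal.one_ne_top (hdiam k)) ht (he k).ne'
  refine ⟨x, r, hr, hcover.trans (iUnion_mono hsub), ?_⟩
  calc ∑' k, ENNReal.ofReal (r k ^ t)
      ≤ ∑' k, ((⨆ _ : (u k).Nonempty, ediam (u k) ^ t) + e k) := ENNReal.tsum_le_tsum hle
    _ = (∑' k, ⨆ _ : (u k).Nonempty, ediam (u k) ^ t) + ∑' k, e k := ENNReal.tsum_add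
    _ ≤ ε / 2 + ε / 2 := add_le_add hsum.le hesum.le
    _ = ε := ENNReal.add_halves ε

/-- A mass distribution principle which needs no limit measure: it suffices that `μ n` satisfies
the Frostman bound down to scale `δ n`, because compactness of the `V n` reduces to finite covers,
all of whose radii exceed `δ n` for large `n`. -/
lemma hausdorffMeasure_iInter_ne_zero_of_measure_ball_le {V : ℕ → Set X} (hV : Antitone V)
    (hVc : ∀ n, IsCompact (V n)) {μ : ℕ → Measure X} [∀ n, IsProbabilityMeasure (μ n)]
    (hμV : ∀ n, μ n (V n)ᶜ = 0) {δ : ℕ → ℝ} (hδ : Tendsto δ atTop (𝓝 0)) {t : ℝ} (ht : 0 < t)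
    {C : ℝ≥0∞} (hC : C ≠ ∞)
    (hball : ∀ n x r, 0 < r → δ n ≤ r → μ n (ball x r) ≤ C * ENNReal.ofReal (r ^ t)) :
    μH[t] (⋂ n, V n) ≠ 0 := by
  intro hzero
  have : Nonempty X := nonempty_of_isProbabilityMeasure (μ 0)
  obtain ⟨x, r, hr, hcover, hsum⟩ := exists_ball_cover_of_hausdorffMeasure_eq_zero ht hzero
    (ENNReal.inv_ne_zero.mpr (ENNReal.add_ne_top.mpr ⟨hC, ENNReal.one_ne_top⟩))
  have hopen : IsOpen (⋃ k, ball (x k) (r k)) := isOpen_iUnion fun _ => isOpen_ball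
  obtain ⟨N, hN⟩ := exists_subset_nhds_of_isCompact hV.directed_ge hVc
    fun y hy => hopen.mem_nhds (hcover hy)
  obtain ⟨F, hF⟩ := (hVc N).elim_finite_subcover _ (fun _ => isOpen_ball) hN
  have hscale : ∀ᶠ n in atTop, ∀ k ∈ F, δ n ≤ r k :=
    (Finset.eventually_all F).mpr fun k _ => hδ.eventually_le_const (hr k)
  obtain ⟨n, hnscale, hNn⟩ := (hscale.and (eventually_ge_atTop N)).exists
  refine lt_irrefl (1 : ℝ≥0∞) ?_
  calc 1 = μ n (V n) := ((prob_compl_eq_zero_iff (hVc n).measurableSet).mp (hμV n)).symm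
    _ ≤ μ n (⋃ k ∈ F, ball (x k) (r k)) := measure_mono ((hV hNn).trans hF)
    _ ≤ ∑ k ∈ F, μ n (ball (x k) (r k)) := measure_biUnion_finset_le _ _
    _ ≤ ∑ k ∈ F, C * ENNReal.ofReal (r k ^ t) :=
      Finset.sum_le_sum fun k hk => hball n _ _ (hr k) (hnscale k hk)
    _ = C * ∑ k ∈ F, ENNReal.ofReal (r k ^ t) := (Finset.mul_sum _ _ _).symm
    _ ≤ C * (C + 1)⁻¹ := by
      gcongr
      exact (ENNReal.sum_le_tsum F).trans hsum
    _ < 1 := ENNReal.div_lt_of_lt_mul (by simpa using ENNReal.lt_add_right hC one_ne_zero)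

end HausdorffMeasure

lemma encard_mul_le_measure_of_aedisjoint {α ι : Type*} [MeasurableSpace α] {μ : Measure α}
    {S : Set ι} {A : S → Set α} {B : Set α} {a : ℝ≥0∞} (hmeas : ∀ i, NullMeasurableSet (A i) μ)
    (hdisj : Pairwise (Function.onFun (AEDisjoint μ) A)) (hsub : ∀ i, A i ⊆ B)
    (ha : ∀ i, a ≤ μ (A i)) : S.encard * a ≤ μ B :=
  calc S.encard * a = ∑' _ : S, a := (ENNReal.tsum_set_const S a).symm
    _ ≤ ∑' i, μ (A i) := ENNReal.tsum_le_tsum ha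
    _ ≤ μ (⋃ i, A i) := tsum_meas_le_meas_iUnion_of_disjoint₀ μ hmeas hdisj
    _ ≤ μ B := measure_mono (iUnion_subset hsub)

lemma log_mul_inv_lt_coe_iff {z : ℝ≥0∞} {n : ℕ} (hn : 0 < n) {a : ℝ} :
    z.log * (((n : ℝ)⁻¹ : ℝ) : EReal) < a ↔ z < ENNReal.ofReal (Real.exp (a * n)) := by
  have hn' : (0 : EReal) < (n : ℝ) := by exact_mod_cast hn
  rw [EReal.coe_inv, ← div_eq_mul_inv, EReal.div_lt_iff hn' (EReal.coe_ne_top _),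
    ← EReal.coe_mul, ← EReal.exp_lt_exp_iff, ENNReal.exp_log, EReal.exp_coe]

lemma coe_lt_log_mul_inv_iff {z : ℝ≥0∞} {n : ℕ} (hn : 0 < n) {a : ℝ} :
    a < z.log * (((n : ℝ)⁻¹ : ℝ) : EReal) ↔ ENNReal.ofReal (Real.exp (a * n)) < z := by
  have hn' : (0 : EReal) < (n : ℝ) := by exact_mod_cast hn
  rw [EReal.coe_inv, ← div_eq_mul_inv, EReal.lt_div_iff hn' (EReal.coe_ne_top _),
    ← EReal.coe_mul, ← EReal.exp_lt_exp_iff, ENNReal.exp_log, EReal.exp_coe]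

lemma tsum_ne_top_of_eventually_le_ofReal {f : ℕ → ℝ≥0∞} {g : ℕ → ℝ} (hf : ∀ k, f k ≠ ∞)
    (hg : Summable g) (hfg : ∀ᶠ k in atTop, f k ≤ ENNReal.ofReal (g k)) : ∑' k, f k ≠ ∞ := by
  obtain ⟨N, hN⟩ := eventually_atTop.mp hfg
  rw [← Summable.sum_add_tsum_nat_add' (k := N) ENNReal.summable]
  refine ENNReal.add_ne_top.mpr ⟨ENNReal.sum_ne_top.mpr fun k _ => hf k, ?_⟩
  exact ne_top_of_le_ne_top ((summable_nat_add_iff N).mpr hg).tsum_ofReal_ne_top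
    (ENNReal.tsum_le_tsum fun k => hN _ (Nat.le_add_left N k))

namespace NCIFS

section Words

variable {d : ℕ} {Φ : NCIFS d} {m n : ℕ}

/-- The initial segment of a word on levels `m, …, n-1` that occupies the levels `m, …, k-1`. -/
def Word.take (ω : Φ.Word m n) (k : ℕ) (hk : k ≤ n) : Φ.Word m k :=
  fun j => ω ⟨j, Finset.Ico_subset_Ico_right hk j.2⟩

/-- The final segment of a word on levels `m, …, n-1` that occupies the levels `k, …, n-1`. -/
def Word.drop (ω : Φ.Word m n) (k : ℕ) (hk : m ≤ k) : Φ.Word k n :=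
  fun j => ω ⟨j, Finset.Ico_subset_Ico_left hk j.2⟩

variable (Φ) in
/-- Cutting a word at level `k`; the inverse is concatenation. -/
def splitEquiv {m k n : ℕ} (hmk : m ≤ k) (hkn : k ≤ n) :
    Φ.Word m n ≃ Φ.Word m k × Φ.Word k n where
  toFun ω := (ω.take k hkn, ω.drop k hmk)
  invFun p j :=
    if h : (j : ℕ) < k then p.1 ⟨j, Finset.mem_Ico.mpr ⟨(Finset.mem_Ico.mp j.2).1, h⟩⟩
    else p.2 ⟨j, Finset.mem_Ico.mpr ⟨not_lt.mp h, (Finset.mem_Ico.mp j.2).2⟩⟩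
  left_inv ω := by
    funext j
    simp only [Word.take, Word.drop]
    split_ifs <;> rfl
  right_inv p := by
    refine Prod.ext (funext fun j => ?_) (funext fun j => ?_)
    · exact dif_pos (Finset.mem_Ico.mp j.2).2
    · exact dif_neg (Finset.mem_Ico.mp j.2).1.not_gt

lemma segN_le_take_mul_drop {k : ℕ} (hmk : m ≤ k) (hkn : k ≤ n) (ω : Φ.Word m n) :
    Φ.segN m n ω ≤ Φ.segN m k (ω.take k hkn) * Φ.segN k n (ω.drop k hmk) :=
  (Φ.segN_split m k n hmk hkn ω _ _ (fun _ _ _ => rfl) (fun _ _ _ => rfl)).1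

lemma segN_take_mul_drop_le {k : ℕ} (hmk : m ≤ k) (hkn : k ≤ n) (ω : Φ.Word m n) :
    Φ.segN m k (ω.take k hkn) * Φ.segN k n (ω.drop k hmk) ≤ Φ.K * Φ.segN m n ω :=
  (Φ.segN_split m k n hmk hkn ω _ _ (fun _ _ _ => rfl) (fun _ _ _ => rfl)).2

lemma wMap_eq_take_drop {k : ℕ} (hmk : m ≤ k) (hkn : k ≤ n) (ω : Φ.Word m n)
    {x : EuclideanSpace ℝ (Fin d)} (hx : x ∈ Φ.X) :
    Φ.wMap m n ω x = Φ.wMap m k (ω.take k hkn) (Φ.wMap k n (ω.drop k hmk) x) :=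
  Φ.wMap_comp m k n hmk hkn ω _ _ (fun _ _ _ => rfl) (fun _ _ _ => rfl) x hx

variable (Φ) in
lemma tendsto_pow_η : Tendsto (fun n => Φ.η ^ n) atTop (𝓝 0) :=
  tendsto_pow_atTop_nhds_zero_of_lt_one Φ.hη_pos.le Φ.hη_lt

lemma segN_zero_le (ω : Φ.Word 0 n) : Φ.segN 0 n ω ≤ Φ.η ^ n :=
  Φ.segN_contract 0 n ω

lemma segN_self (ω : Φ.Word m m) : Φ.segN m m ω = 1 := by
  have hpos : 0 < Φ.segN m m ω := Φ.segN_pos m m ω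
  refine le_antisymm (by simpa using Φ.segN_contract m m ω) ?_
  exact (le_mul_iff_one_le_left hpos).mp (segN_le_take_mul_drop le_rfl le_rfl ω)

lemma exists_segN_take_succ_le {r : ℝ} (hr : r < 1) (ω : Φ.Word 0 n) (hω : Φ.segN 0 n ω ≤ r) :
    ∃ k, ∃ hk : k + 1 ≤ n, Φ.segN 0 (k + 1) (ω.take (k + 1) hk) ≤ r ∧
      r ≤ Φ.segN 0 k (ω.take k (k.le_succ.trans hk)) := by
  classical
  have hex : ∃ k, ∃ hk : k ≤ n, Φ.segN 0 k (ω.take k hk) ≤ r := ⟨n, le_rfl, hω⟩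
  obtain ⟨hn, hle⟩ := Nat.find_spec hex
  obtain ⟨k, hk⟩ : ∃ k, Nat.find hex = k + 1 := Nat.exists_eq_succ_of_ne_zero fun hzero => by
    obtain ⟨_, hle⟩ := hzero ▸ Nat.find_spec hex
    exact hr.not_ge (segN_self (ω.take 0 _) ▸ hle)
  have hmin := Nat.find_min hex (m := k) (by omega)
  generalize Nat.find hex = j at hn hle hk
  subst hk
  exact ⟨k, hn, hle, (not_le.mp fun h => hmin ⟨_, h⟩).le⟩

end Words

section Cells

variable {d : ℕ} {Φ : NCIFS d} {m n : ℕ}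

/-- The cell `φ_ω(X)` of a word `ω`. -/
def cell (ω : Φ.Word m n) : Set (EuclideanSpace ℝ (Fin d)) := Φ.wMap m n ω '' Φ.X

lemma cell_subset_cell_take {k : ℕ} (hmk : m ≤ k) (hkn : k ≤ n) (ω : Φ.Word m n) :
    cell ω ⊆ cell (ω.take k hkn) := by
  rintro _ ⟨x, hx, rfl⟩
  rw [wMap_eq_take_drop hmk hkn ω hx]
  exact mem_image_of_mem _ (Φ.wMap_mapsTo _ _ _ hx)

variable (Φ) in
lemma K_pos : 0 < Φ.K := one_pos.trans_le Φ.hK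

lemma lipschitzOnWith_wMap (ω : Φ.Word m n) :
    LipschitzOnWith (Φ.segN m n ω).toNNReal (Φ.wMap m n ω) Φ.X := by
  refine LipschitzOnWith.of_dist_le_mul fun x hx y hy => ?_
  rw [Real.coe_toNNReal _ (Φ.segN_pos m n ω).le]
  exact Φ.wMap_lip m n ω x hx y hy

lemma injOn_wMap (ω : Φ.Word m n) : InjOn (Φ.wMap m n ω) Φ.X := by
  intro x hx y hy hxy
  have hcolip := Φ.wMap_colip m n ω x hx y hy
  rw [hxy, dist_self] at hcolip
  exact dist_le_zero.mp
    (nonpos_of_mul_nonpos_right hcolip (div_pos (Φ.segN_pos m n ω) Φ.K_pos))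

lemma isCompact_cell (ω : Φ.Word m n) : IsCompact (cell ω) :=
  Φ.hX_compact.image_of_continuousOn (lipschitzOnWith_wMap ω).continuousOn

lemma ediam_cell_le (ω : Φ.Word m n) :
    ediam (cell ω) ≤ ENNReal.ofReal (Φ.segN m n ω) * ediam Φ.X :=
  ediam_image_le_iff.mpr fun _ hx _ hy =>
    (lipschitzOnWith_wMap ω hx hy).trans (mul_le_mul_right (edist_le_ediam_of_mem hx hy) _)

end Cells

section Volume

variable {d : ℕ} {Φ : NCIFS d} {m n : ℕ}

instance isAddHaarMeasure_hausdorffMeasure :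
    (μH[d] : Measure (EuclideanSpace ℝ (Fin d))).IsAddHaarMeasure := by
  simpa only [finrank_euclideanSpace_fin] using
    (inferInstance : (μH[Module.finrank ℝ (EuclideanSpace ℝ (Fin d))] :
      Measure (EuclideanSpace ℝ (Fin d))).IsAddHaarMeasure)

lemma hausdorffMeasure_X_ne_zero : μH[d] Φ.X ≠ 0 := by
  have hint : (interior Φ.X).Nonempty := by
    rw [← closure_nonempty_iff, Φ.hX_regular]
    exact Φ.hX_nonempty
  exact (Measure.measure_pos_of_nonempty_interior _ hint).ne'

lemma hausdorffMeasure_wMap_image_eq_zero (ω : Φ.Word m n) {A : Set (EuclideanSpace ℝ (Fin d))}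
    (hA : A ⊆ Φ.X) (hnull : μH[d] A = 0) : μH[d] (Φ.wMap m n ω '' A) = 0 := by
  have hle := ((lipschitzOnWith_wMap ω).mono hA).hausdorffMeasure_image_le d.cast_nonneg
  rwa [hnull, mul_zero, nonpos_iff_eq_zero] at hle

lemma aedisjoint_cell_of_level {a b : Φ.Word n (n + 1)} (hab : a ≠ b) :
    AEDisjoint μH[d] (cell a) (cell b) := by
  have hfrontier (ω : Φ.Word n (n + 1)) : μH[d] (Φ.wMap n (n + 1) ω '' frontier Φ.X) = 0 :=
    hausdorffMeasure_wMap_image_eq_zero ω Φ.hX_compact.isClosed.frontier_subset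
      (Φ.hX_convex.addHaar_frontier _)
  refine measure_mono_null ?_ (measure_union_null (hfrontier a) (hfrontier b))
  rintro _ ⟨⟨y, hy, rfl⟩, z, hz, hzy⟩
  by_cases hyi : y ∈ interior Φ.X
  · refine Or.inr ⟨z, ⟨subset_closure hz, fun hzi => ?_⟩, hzy⟩
    exact disjoint_left.mp (Φ.osc n a b hab) ⟨y, hyi, rfl⟩ ⟨z, hzi, hzy⟩
  · exact Or.inl ⟨y, ⟨subset_closure hy, hyi⟩, rfl⟩

lemma aedisjoint_cell {a b : Φ.Word m n} (hab : a ≠ b) :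
    AEDisjoint μH[d] (cell a) (cell b) := by
  induction n with
  | zero => exact absurd (funext fun j => absurd j.2 (by simp)) hab
  | succ n ih =>
    rcases Nat.lt_or_ge n m with hnm | hmn
    · exact absurd (funext fun j => absurd j.2 (by simp [hnm])) hab
    by_cases htake : a.take n n.le_succ = b.take n n.le_succ
    · have hdrop : a.drop n hmn ≠ b.drop n hmn := fun hdrop =>
        hab ((Φ.splitEquiv hmn n.le_succ).injective (Prod.ext htake hdrop))
      refine measure_mono_null ?_ (hausdorffMeasure_wMap_image_eq_zero (a.take n n.le_succ)
        ?_ (aedisjoint_cell_of_level hdrop))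
      · rintro _ ⟨⟨y, hy, rfl⟩, z, hz, hzy⟩
        rw [wMap_eq_take_drop hmn n.le_succ a hy] at hzy ⊢
        rw [wMap_eq_take_drop hmn n.le_succ b hz, ← htake] at hzy
        have heq := injOn_wMap _ (Φ.wMap_mapsTo _ _ _ hz) (Φ.wMap_mapsTo _ _ _ hy) hzy
        exact mem_image_of_mem _ ⟨mem_image_of_mem _ hy, z, hz, heq⟩
      · exact inter_subset_left.trans (Φ.wMap_mapsTo _ _ _).image_subset
    · exact (ih htake).mono (cell_subset_cell_take hmn n.le_succ a)
        (cell_subset_cell_take hmn n.le_succ b)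

/-- `A` is the image of `X` shrunk by the factor `r / ‖Dφ_ω‖` towards a point that `φ_ω` sends
into the ball. -/
lemma exists_subset_cell_inter_closedBall (ω : Φ.Word m n) {x : EuclideanSpace ℝ (Fin d)} {r : ℝ}
    (hr : 0 < r) (hrω : r ≤ Φ.segN m n ω) (hmeet : (cell ω ∩ ball x r).Nonempty) :
    ∃ A ⊆ cell ω, A ⊆ closedBall x ((1 + diam Φ.X) * r) ∧ IsCompact A ∧
      ENNReal.ofReal ((r / Φ.K) ^ d) * μH[d] Φ.X ≤ μH[d] A := by
  obtain ⟨_, ⟨q, hq, rfl⟩, hball⟩ := hmeet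
  have hK : 0 < Φ.K := Φ.K_pos
  have hseg : 0 < Φ.segN m n ω := Φ.segN_pos m n ω
  set s : ℝ := r / Φ.segN m n ω with hs
  have hs0 : 0 ≤ s := by positivity
  have hmaps : MapsTo (AffineMap.homothety q s) Φ.X Φ.X := fun y hy => by
    rw [AffineMap.homothety_eq_lineMap]
    exact Φ.hX_convex.lineMap_mem hq hy ⟨hs0, (div_le_one hseg).mpr hrω⟩
  refine ⟨Φ.wMap m n ω '' (AffineMap.homothety q s '' Φ.X), image_mono hmaps.image_subset,
    ?_, ?_, ?_⟩
  · rintro _ ⟨_, ⟨y, hy, rfl⟩, rfl⟩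
    calc dist (Φ.wMap m n ω (AffineMap.homothety q s y)) x
        ≤ dist (Φ.wMap m n ω (AffineMap.homothety q s y)) (Φ.wMap m n ω q)
          + dist (Φ.wMap m n ω q) x := dist_triangle _ _ _
      _ ≤ Φ.segN m n ω * (s * diam Φ.X) + r := by
        gcongr
        · refine (Φ.wMap_lip m n ω _ (hmaps hy) q hq).trans ?_
          rw [dist_homothety_center, Real.norm_of_nonneg hs0]
          gcongr
          exact dist_le_diam_of_mem Φ.hX_compact.isBounded hq hy
        · exact (mem_ball.mp hball).le
      _ = (1 + diam Φ.X) * r := by rw [hs]; field_simp; ring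
  · exact (Φ.hX_compact.image (AffineMap.homothety_continuous q s)).image_of_continuousOn
      ((lipschitzOnWith_wMap ω).continuousOn.mono hmaps.image_subset)
  · calc ENNReal.ofReal ((r / Φ.K) ^ d) * μH[d] Φ.X
        = ENNReal.ofReal ((Φ.segN m n ω / Φ.K) ^ (d : ℝ))
          * μH[d] (AffineMap.homothety q s '' Φ.X) := by
          rw [Measure.addHaar_image_homothety, finrank_euclideanSpace_fin, ← mul_assoc,
            abs_of_nonneg (by positivity), ← ENNReal.ofReal_mul (by positivity), Real.rpow_natCast,
            ← mul_pow]
          congr 3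
          rw [hs]
          field_simp
      _ ≤ μH[d] (Φ.wMap m n ω '' (AffineMap.homothety q s '' Φ.X)) :=
        ofReal_rpow_mul_hausdorffMeasure_le_image (div_pos hseg hK) d.cast_nonneg
          fun y hy z hz => Φ.wMap_colip m n ω y (hmaps.image_subset hy) z (hmaps.image_subset hz)

variable (Φ) in
/-- The words on levels `m, …, n-1` whose cells meet `ball x r` and have size at least `r`. -/
def largeWords (m n : ℕ) (x : EuclideanSpace ℝ (Fin d)) (r : ℝ) : Set (Φ.Word m n) :=
  {ω | r ≤ Φ.segN m n ω ∧ (cell ω ∩ ball x r).Nonempty}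

lemma encard_largeWords_mul_le (m n : ℕ) (x : EuclideanSpace ℝ (Fin d)) {r : ℝ} (hr : 0 < r) :
    (Φ.largeWords m n x r).encard * (ENNReal.ofReal ((r / Φ.K) ^ d) * μH[d] Φ.X) ≤
      ENNReal.ofReal (((1 + diam Φ.X) * r) ^ d) *
        μH[d] (ball (0 : EuclideanSpace ℝ (Fin d)) 1) := by
  choose A hAcell hAball hAcpt hAvol using fun ω : Φ.largeWords m n x r =>
    exists_subset_cell_inter_closedBall ω.1 hr ω.2.1 ω.2.2
  calc (Φ.largeWords m n x r).encard * (ENNReal.ofReal ((r / Φ.K) ^ d) * μH[d] Φ.X)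
      ≤ μH[d] (closedBall x ((1 + diam Φ.X) * r)) :=
        encard_mul_le_measure_of_aedisjoint
          (fun ω => (hAcpt ω).measurableSet.nullMeasurableSet)
          (fun a b hab => (aedisjoint_cell (Subtype.coe_ne_coe.mpr hab)).mono
            (hAcell a) (hAcell b)) hAball hAvol
    _ = _ := by
      have := diam_nonneg (s := Φ.X)
      rw [Measure.addHaar_closedBall _ _ (by positivity), finrank_euclideanSpace_fin]

variable (Φ) in
lemma exists_encard_largeWords_le : ∃ M : ℝ≥0∞, M ≠ ∞ ∧
    ∀ m n x r, 0 < r → (Φ.largeWords m n x r).encard ≤ M := by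
  have hK := Φ.K_pos
  set c := ENNReal.ofReal (Φ.K⁻¹ ^ d) * μH[d] Φ.X
  set b := ENNReal.ofReal ((1 + diam Φ.X) ^ d) * μH[d] (ball (0 : EuclideanSpace ℝ (Fin d)) 1)
  have hc0 : c ≠ 0 := mul_ne_zero (by positivity) hausdorffMeasure_X_ne_zero
  have hc : c ≠ ∞ := ENNReal.mul_ne_top ENNReal.ofReal_ne_top Φ.hX_compact.measure_lt_top.ne
  have hb : b ≠ ∞ := ENNReal.mul_ne_top ENNReal.ofReal_ne_top measure_ball_lt_top.ne
  refine ⟨b / c, ENNReal.div_ne_top hb hc0, fun m n x r hr => ?_⟩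
  have hrd : ENNReal.ofReal (r ^ d) ≠ 0 := by positivity
  rw [ENNReal.le_div_iff_mul_le (Or.inl hc0) (Or.inl hc),
    ← ENNReal.mul_le_mul_iff_right hrd ENNReal.ofReal_ne_top]
  have hle := encard_largeWords_mul_le (Φ := Φ) m n x hr
  rw [div_eq_mul_inv, mul_pow, mul_pow, ENNReal.ofReal_mul (by positivity),
    mul_comm (_ ^ d) (r ^ d), ENNReal.ofReal_mul (by positivity)] at hle
  calc _ = _ := by ring
    _ ≤ _ := hle
    _ = _ := by ring

end Volume

section PartitionFunction

variable {d : ℕ} {Φ : NCIFS d} {m k n : ℕ} {t : ℝ}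

/-- The weight `‖Dφ_ω‖^t` of a word `ω`, as a summand of the partition function. -/
def weight (t : ℝ) (ω : Φ.Word m n) : ℝ≥0∞ := ENNReal.ofReal (Φ.segN m n ω ^ t)

variable (Φ) in
/-- The partition function of the words on the levels `m, …, n-1`; for `m = 0` it is `Z_n(t)`. -/
def partition (m n : ℕ) (t : ℝ) : ℝ≥0∞ := ∑' ω : Φ.Word m n, weight t ω

lemma partition_zero (n : ℕ) (t : ℝ) : Φ.partition 0 n t = Φ.Z n t := rfl

lemma weight_ne_zero (t : ℝ) (ω : Φ.Word m n) : weight t ω ≠ 0 :=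
  (ENNReal.ofReal_pos.mpr (Real.rpow_pos_of_pos (Φ.segN_pos m n ω) t)).ne'

lemma weight_le_of_segN_le (ht : 0 ≤ t) {ω : Φ.Word m n} {r : ℝ} (hω : Φ.segN m n ω ≤ r) :
    weight t ω ≤ ENNReal.ofReal (r ^ t) :=
  ENNReal.ofReal_le_ofReal (Real.rpow_le_rpow (Φ.segN_pos m n ω).le hω ht)

lemma weight_mul_weight (t : ℝ) (ω : Φ.Word m k) (τ : Φ.Word k n) :
    weight t ω * weight t τ = ENNReal.ofReal ((Φ.segN m k ω * Φ.segN k n τ) ^ t) := by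
  have hω := (Φ.segN_pos m k ω).le
  rw [weight, weight, ← ENNReal.ofReal_mul (by positivity),
    Real.mul_rpow hω (Φ.segN_pos k n τ).le]

lemma weight_le_take_mul_drop (ht : 0 ≤ t) (hmk : m ≤ k) (hkn : k ≤ n) (ω : Φ.Word m n) :
    weight t ω ≤ weight t (ω.take k hkn) * weight t (ω.drop k hmk) := by
  rw [weight_mul_weight]
  exact weight_le_of_segN_le ht (segN_le_take_mul_drop hmk hkn ω)

lemma weight_take_mul_drop_le (ht : 0 ≤ t) (hmk : m ≤ k) (hkn : k ≤ n) (ω : Φ.Word m n) :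
    weight t (ω.take k hkn) * weight t (ω.drop k hmk) ≤
      ENNReal.ofReal (Φ.K ^ t) * weight t ω := by
  have hω := (Φ.segN_pos m n ω).le
  have hK := Φ.K_pos.le
  rw [weight_mul_weight, weight, ← ENNReal.ofReal_mul (by positivity), ← Real.mul_rpow hK hω]
  refine ENNReal.ofReal_le_ofReal (Real.rpow_le_rpow ?_ (segN_take_mul_drop_le hmk hkn ω) ht)
  exact mul_nonneg (Φ.segN_pos m k _).le (Φ.segN_pos k n _).le

lemma tsum_take_mul_drop (hmk : m ≤ k) (hkn : k ≤ n) (f : Φ.Word m k → ℝ≥0∞)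
    (g : Φ.Word k n → ℝ≥0∞) :
    ∑' ω : Φ.Word m n, f (ω.take k hkn) * g (ω.drop k hmk) = (∑' τ, f τ) * ∑' σ, g σ := by
  refine ((Φ.splitEquiv hmk hkn).tsum_eq fun p => f p.1 * g p.2).trans ?_
  rw [ENNReal.tsum_prod (f := fun τ σ => f τ * g σ)]
  simp only [ENNReal.tsum_mul_left, ENNReal.tsum_mul_right]

lemma partition_mul_partition_le (ht : 0 ≤ t) (hmk : m ≤ k) (hkn : k ≤ n) :
    Φ.partition m k t * Φ.partition k n t ≤ ENNReal.ofReal (Φ.K ^ t) * Φ.partition m n t := by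
  rw [partition, partition, partition, ← tsum_take_mul_drop hmk hkn, ← ENNReal.tsum_mul_left]
  exact ENNReal.tsum_le_tsum (weight_take_mul_drop_le ht hmk hkn)

lemma tsum_weight_take_mem_le (ht : 0 ≤ t) (hmk : m ≤ k) (hkn : k ≤ n) (T : Set (Φ.Word m k)) :
    ∑' ω : {ω : Φ.Word m n | ω.take k hkn ∈ T}, weight t ω.1 ≤
      (∑' τ : T, weight t τ.1) * Φ.partition k n t := by
  rw [tsum_subtype, tsum_subtype, partition, ← tsum_take_mul_drop hmk hkn]
  refine ENNReal.tsum_le_tsum fun ω => indicator_apply_le' (fun hω : ω.take k hkn ∈ T => ?_)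
    fun _ => zero_le
  rw [indicator_of_mem hω]
  exact weight_le_take_mul_drop ht hmk hkn ω

lemma Z_ne_zero (n : ℕ) (t : ℝ) : Φ.Z n t ≠ 0 := fun hzero =>
  weight_ne_zero t (Classical.arbitrary (Φ.Word 0 n)) (ENNReal.tsum_eq_zero.mp hzero _)

lemma Z_ne_top [∀ n, Finite (Φ.I n)] (n : ℕ) (t : ℝ) : Φ.Z n t ≠ ∞ := by
  have := Fintype.ofFinite (Φ.Word 0 n)
  rw [Z, tsum_fintype]
  exact ENNReal.sum_ne_top.mpr fun _ _ => ENNReal.ofReal_ne_top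

lemma Z_le_mul_Z {s : ℝ} (hst : s ≤ t) (n : ℕ) :
    Φ.Z n t ≤ ENNReal.ofReal ((Φ.η ^ n) ^ (t - s)) * Φ.Z n s := by
  rw [Z, Z, ← ENNReal.tsum_mul_left]
  refine ENNReal.tsum_le_tsum fun ω => ?_
  have hω := Φ.segN_pos 0 n ω
  have hη := Φ.hη_pos
  rw [← ENNReal.ofReal_mul (by positivity), ← sub_add_cancel t s, Real.rpow_add hω,
    add_sub_cancel_right]
  gcongr
  exact segN_zero_le ω

lemma eventually_lt_Z_of_lt_lowP {a : ℝ} (ha : a < Φ.lowP t) :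
    ∀ᶠ n : ℕ in atTop, ENNReal.ofReal (Real.exp (a * n)) < Φ.Z n t := by
  filter_upwards [eventually_lt_of_lt_liminf ha, eventually_gt_atTop 0] with n hn hn0
  exact (coe_lt_log_mul_inv_iff hn0).mp hn

lemma frequently_Z_lt_of_lowP_lt {a : ℝ} (ha : Φ.lowP t < a) :
    ∃ᶠ n : ℕ in atTop, Φ.Z n t < ENNReal.ofReal (Real.exp (a * n)) := by
  refine ((frequently_lt_of_liminf_lt (by isBoundedDefault) ha).and_eventually
    (eventually_gt_atTop 0)).mono ?_
  rintro n ⟨hn, hn0⟩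
  exact (log_mul_inv_lt_coe_iff hn0).mp hn

lemma frequently_Z_le_one {s : ℝ} (hst : s < t) (hs : Φ.lowP s ≤ 0) :
    ∃ᶠ n in atTop, Φ.Z n t ≤ 1 := by
  set a := -(Real.log Φ.η * (t - s)) with ha
  have ha0 : 0 < a := by
    rw [ha, Left.neg_pos_iff]
    exact mul_neg_of_neg_of_pos (Real.log_neg Φ.hη_pos Φ.hη_lt) (sub_pos.mpr hst)
  refine (frequently_Z_lt_of_lowP_lt (hs.trans_lt (EReal.coe_pos.mpr ha0))).mono fun n hn => ?_
  have hη : (Φ.η ^ n) ^ (t - s) = Real.exp (-(a * n)) := by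
    rw [Real.rpow_def_of_pos (pow_pos Φ.hη_pos n), Real.log_pow, ha]
    ring_nf
  calc Φ.Z n t ≤ ENNReal.ofReal ((Φ.η ^ n) ^ (t - s)) * Φ.Z n s := Z_le_mul_Z hst.le n
    _ ≤ ENNReal.ofReal (Real.exp (-(a * n))) * ENNReal.ofReal (Real.exp (a * n)) := by
      rw [hη]
      gcongr
    _ = 1 := by
      rw [← ENNReal.ofReal_mul (Real.exp_pos _).le, ← Real.exp_add, neg_add_cancel, Real.exp_zero,
        ENNReal.ofReal_one]

end PartitionFunction

section UpperBound

variable {d : ℕ} {Φ : NCIFS d} {t : ℝ}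

lemma ediam_cell_rpow_le (ht : 0 ≤ t) {m n : ℕ} (ω : Φ.Word m n) :
    ediam (cell ω) ^ t ≤ ediam Φ.X ^ t * weight t ω := by
  refine (ENNReal.rpow_le_rpow (ediam_cell_le ω) ht).trans_eq ?_
  rw [ENNReal.mul_rpow_of_nonneg _ _ ht, ENNReal.ofReal_rpow_of_pos (Φ.segN_pos m n ω), mul_comm,
    weight]

variable [∀ n, Countable (Φ.I n)]

lemma hausdorffMeasure_limitSet_le_liminf (ht : 0 ≤ t) :
    μH[t] Φ.limitSet ≤ liminf (fun n => ediam Φ.X ^ t * Φ.Z n t) atTop := by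
  have hX : ediam Φ.X ≠ ∞ := Φ.hX_compact.isBounded.ediam_ne_top
  have hsmall : Tendsto (fun n => ENNReal.ofReal (Φ.η ^ n) * ediam Φ.X) atTop (𝓝 0) := by
    have hη := ENNReal.tendsto_ofReal (Φ.tendsto_pow_η)
    simpa using ENNReal.Tendsto.mul_const hη (Or.inr hX)
  refine (Measure.hausdorffMeasure_le_liminf_tsum t Φ.limitSet _ hsmall
    (fun n (ω : Φ.Word 0 n) => cell ω) (Eventually.of_forall fun n ω => ?_)
    (Eventually.of_forall (iInter_subset _))).trans ?_
  · refine (ediam_cell_le ω).trans ?_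
    gcongr
    exact segN_zero_le ω
  · refine liminf_le_liminf (Eventually.of_forall fun n => ?_)
    simp only [Z, ← ENNReal.tsum_mul_left]
    exact ENNReal.tsum_le_tsum (ediam_cell_rpow_le ht)

variable (Φ) in
lemma dimH_limitSet_le_Bdim : dimH Φ.limitSet ≤ Φ.Bdim := by
  refine dimH_le fun t htop => le_of_not_gt fun hlt => ?_
  obtain ⟨s, hBs, hst⟩ := ENNReal.lt_iff_exists_nnreal_btwn.mp hlt
  have hpressure : Φ.lowP s ≤ 0 := le_of_not_gt fun hpos =>
    hBs.not_ge (le_iSup_of_le ⟨s, s.coe_nonneg, hpos⟩ ENNReal.ofReal_coe_nnreal.ge)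
  have hfreq : ∃ᶠ n in atTop, ediam Φ.X ^ (t : ℝ) * Φ.Z n t ≤ ediam Φ.X ^ (t : ℝ) :=
    (frequently_Z_le_one (by exact_mod_cast hst) hpressure).mono fun n => mul_le_of_le_one_right'
  refine ((hausdorffMeasure_limitSet_le_liminf t.coe_nonneg).trans
    (liminf_le_of_frequently_le' hfreq)).not_gt ?_
  rw [htop]
  exact ENNReal.rpow_lt_top_of_nonneg t.coe_nonneg Φ.hX_compact.isBounded.ediam_ne_top

end UpperBound

section BallEstimate

variable {d : ℕ} {Φ : NCIFS d} {k n : ℕ} {t r : ℝ} {x : EuclideanSpace ℝ (Fin d)}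

variable (Φ) in
/-- The words `τ` on the levels `0, …, k` with `‖Dφ_τ‖ ≤ r` whose parent on the levels
`0, …, k-1` is a large word, i.e. the words at which a descent inside `ball x r` may stop. -/
def stoppingWords (k : ℕ) (x : EuclideanSpace ℝ (Fin d)) (r : ℝ) : Set (Φ.Word 0 (k + 1)) :=
  {τ | Φ.segN 0 (k + 1) τ ≤ r ∧ τ.take k k.le_succ ∈ Φ.largeWords 0 k x r}

lemma exists_take_mem_stoppingWords (hr : r < 1) {ω : Φ.Word 0 n} (hω : Φ.segN 0 n ω ≤ r)
    (hmeet : (cell ω ∩ ball x r).Nonempty) :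
    ∃ k : Fin n, ω.take (k + 1) k.2 ∈ Φ.stoppingWords k x r := by
  obtain ⟨k, hk, hsmall, hlarge⟩ := exists_segN_take_succ_le hr ω hω
  refine ⟨⟨k, hk⟩, hsmall, hlarge, hmeet.mono ?_⟩
  gcongr
  exact cell_subset_cell_take k.zero_le (k.le_succ.trans hk) ω

lemma card_word_succ_le (k : ℕ) : ENat.card (Φ.Word k (k + 1)) ≤ ENat.card (Φ.I k) := by
  refine ENat.card_le_card_of_injective
    (f := fun ω : Φ.Word k (k + 1) => ω ⟨k, by simp⟩) fun a b hab => funext ?_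
  rintro ⟨j, hj⟩
  obtain rfl : j = k := by simpa using hj
  exact hab

lemma encard_stoppingWords_le (k : ℕ) (x : EuclideanSpace ℝ (Fin d)) (r : ℝ) :
    (Φ.stoppingWords k x r).encard ≤ (Φ.largeWords 0 k x r).encard * ENat.card (Φ.I k) := by
  let split := Φ.splitEquiv k.zero_le k.le_succ
  have hmaps : MapsTo split (Φ.stoppingWords k x r) (Φ.largeWords 0 k x r ×ˢ univ) :=
    fun _ hτ => ⟨hτ.2, mem_univ _⟩
  calc (Φ.stoppingWords k x r).encard
      ≤ (Φ.largeWords 0 k x r ×ˢ (univ : Set (Φ.Word k (k + 1)))).encard :=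
        encard_le_encard_of_injOn hmaps split.injective.injOn
    _ = (Φ.largeWords 0 k x r).encard * ENat.card (Φ.Word k (k + 1)) := by
        rw [encard_prod, encard_univ]
    _ ≤ _ := by
        gcongr
        exact card_word_succ_le k

lemma tsum_weight_stoppingWords_le (ht : 0 ≤ t) (k : ℕ) (x : EuclideanSpace ℝ (Fin d)) (r : ℝ) :
    ∑' τ : Φ.stoppingWords k x r, weight t τ.1 ≤
      (Φ.stoppingWords k x r).encard * ENNReal.ofReal (r ^ t) := by
  rw [← ENNReal.tsum_set_const]
  exact ENNReal.tsum_le_tsum fun τ => weight_le_of_segN_le ht τ.2.1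

variable [∀ n, Finite (Φ.I n)]

lemma partition_le_div (ht : 0 ≤ t) (hkn : k ≤ n) :
    Φ.partition k n t ≤ ENNReal.ofReal (Φ.K ^ t) * Φ.Z n t / Φ.Z k t := by
  rw [ENNReal.le_div_iff_mul_le (Or.inl (Z_ne_zero k t)) (Or.inl (Z_ne_top k t)), mul_comm,
    ← partition_zero, ← partition_zero]
  exact partition_mul_partition_le ht k.zero_le hkn

lemma tsum_weight_take_mem_stoppingWords_le (ht : 0 ≤ t) {M : ℝ≥0∞}
    (hM : (Φ.largeWords 0 k x r).encard ≤ M) (hk : k + 1 ≤ n) :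
    ∑' ω : {ω : Φ.Word 0 n | ω.take (k + 1) hk ∈ Φ.stoppingWords k x r}, weight t ω.1 ≤
      Nat.card (Φ.I k) / Φ.Z (k + 1) t *
        (M * ENNReal.ofReal (Φ.K ^ t) * ENNReal.ofReal (r ^ t) * Φ.Z n t) := by
  have hcard : ((Φ.stoppingWords k x r).encard : ℝ≥0∞) ≤ M * Nat.card (Φ.I k) := by
    refine (ENat.toENNReal_mono (encard_stoppingWords_le k x r)).trans ?_
    rw [ENat.toENNReal_mul, ENat.card_eq_coe_natCard, ENat.toENNReal_coe]
    gcongr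
  calc _ ≤ (∑' τ : Φ.stoppingWords k x r, weight t τ.1) * Φ.partition (k + 1) n t :=
        tsum_weight_take_mem_le ht (k + 1).zero_le hk _
    _ ≤ M * Nat.card (Φ.I k) * ENNReal.ofReal (r ^ t) *
          (ENNReal.ofReal (Φ.K ^ t) * Φ.Z n t / Φ.Z (k + 1) t) := by
        refine mul_le_mul' ((tsum_weight_stoppingWords_le ht k x r).trans ?_)
          (partition_le_div ht hk)
        gcongr
    _ = _ := by
        simp only [div_eq_mul_inv]
        ring

/-- Every cell that meets the ball is counted at the first level where it has size at most `r`. -/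
lemma tsum_weight_meeting_ball_le (ht : 0 ≤ t) (hnr : Φ.η ^ n ≤ r) (hr : r < 1) {M : ℝ≥0∞}
    (hM : ∀ k, (Φ.largeWords 0 k x r).encard ≤ M) :
    ∑' ω : {ω : Φ.Word 0 n | (cell ω ∩ ball x r).Nonempty}, weight t ω.1 ≤
      (∑' k, Nat.card (Φ.I k) / Φ.Z (k + 1) t) *
        (M * ENNReal.ofReal (Φ.K ^ t) * ENNReal.ofReal (r ^ t) * Φ.Z n t) := by
  set c := M * ENNReal.ofReal (Φ.K ^ t) * ENNReal.ofReal (r ^ t) * Φ.Z n t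
  let fiber (k : Fin n) : Set (Φ.Word 0 n) := {ω | ω.take (k + 1) k.2 ∈ Φ.stoppingWords k x r}
  have hcover : {ω : Φ.Word 0 n | (cell ω ∩ ball x r).Nonempty} ⊆ ⋃ k, fiber k := fun ω hω =>
    mem_iUnion.mpr (exists_take_mem_stoppingWords hr ((segN_zero_le ω).trans hnr) hω)
  calc _ ≤ ∑' ω : ⋃ k, fiber k, weight t ω.1 := ENNReal.tsum_mono_subtype _ hcover
    _ ≤ ∑ k : Fin n, ∑' ω : fiber k, weight t ω.1 := ENNReal.tsum_iUnion_le _ _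
    _ ≤ ∑ k : Fin n, (Nat.card (Φ.I k) / Φ.Z (k + 1) t) * c :=
      Finset.sum_le_sum fun k _ => tsum_weight_take_mem_stoppingWords_le ht (hM k) k.2
    _ = (∑ k ∈ Finset.range n, Nat.card (Φ.I k) / Φ.Z (k + 1) t) * c := by
      rw [← Finset.sum_mul, Fin.sum_univ_eq_sum_range fun k => Nat.card (Φ.I k) / Φ.Z (k + 1) t]
    _ ≤ (∑' k, Nat.card (Φ.I k) / Φ.Z (k + 1) t) * c := by
      gcongr
      exact ENNReal.sum_le_tsum _

end BallEstimate

section GibbsMeasure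

variable {d : ℕ} {Φ : NCIFS d} {n : ℕ} {t : ℝ}

variable (Φ) in
/-- The discrete Gibbs measure of level `n`: each point `φ_ω(x₀)`, `ω ∈ I^n`, carries the mass
`‖Dφ_ω‖^t / Z_n(t)`. The choice of the base point `x₀ ∈ X` is immaterial. -/
def gibbsMeasure (n : ℕ) (t : ℝ) : Measure (EuclideanSpace ℝ (Fin d)) :=
  (Φ.Z n t)⁻¹ • Measure.sum fun ω : Φ.Word 0 n =>
    weight t ω • Measure.dirac (Φ.wMap 0 n ω Φ.hX_nonempty.some)

lemma gibbsMeasure_apply_le {A : Set (EuclideanSpace ℝ (Fin d))} (hA : MeasurableSet A) :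
    Φ.gibbsMeasure n t A ≤
      (Φ.Z n t)⁻¹ * ∑' ω : {ω : Φ.Word 0 n | (cell ω ∩ A).Nonempty}, weight t ω.1 := by
  rw [gibbsMeasure, Measure.smul_apply, smul_eq_mul, Measure.sum_apply _ hA, tsum_subtype]
  gcongr with ω
  rw [Measure.smul_apply, smul_eq_mul, Measure.dirac_apply' _ hA]
  by_cases hω : Φ.wMap 0 n ω Φ.hX_nonempty.some ∈ A
  · rw [indicator_of_mem hω, Pi.one_apply, mul_one, indicator_of_mem]
    exact ⟨_, mem_image_of_mem _ Φ.hX_nonempty.some_mem, hω⟩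
  · rw [indicator_of_notMem hω, mul_zero]
    exact zero_le

lemma gibbsMeasure_compl_iUnion_cell (n : ℕ) (t : ℝ)
    (hmeas : MeasurableSet (⋃ ω : Φ.Word 0 n, cell ω)) :
    Φ.gibbsMeasure n t (⋃ ω : Φ.Word 0 n, cell ω)ᶜ = 0 := by
  have hempty : {ω : Φ.Word 0 n | (cell ω ∩ (⋃ ω : Φ.Word 0 n, cell ω)ᶜ).Nonempty} = ∅ := by
    refine eq_empty_of_forall_notMem fun ω hω => ?_
    obtain ⟨y, hy, hyc⟩ := hω
    exact hyc (mem_iUnion_of_mem ω hy)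
  refine nonpos_iff_eq_zero.mp ((gibbsMeasure_apply_le hmeas.compl).trans_eq ?_)
  rw [hempty, tsum_empty, mul_zero]

variable [∀ n, Finite (Φ.I n)]

instance isProbabilityMeasure_gibbsMeasure (n : ℕ) (t : ℝ) :
    IsProbabilityMeasure (Φ.gibbsMeasure n t) where
  measure_univ := by
    simp only [gibbsMeasure, Measure.smul_apply, Measure.sum_apply _ MeasurableSet.univ,
      measure_univ, smul_eq_mul, mul_one]
    exact ENNReal.inv_mul_cancel (Z_ne_zero n t) (Z_ne_top n t)

variable (Φ) in
lemma exists_gibbsMeasure_ball_le (ht : 0 ≤ t)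
    (hsum : ∑' k, Nat.card (Φ.I k) / Φ.Z (k + 1) t ≠ ∞) :
    ∃ C : ℝ≥0∞, C ≠ ∞ ∧ ∀ n x r, 0 < r → Φ.η ^ n ≤ r →
      Φ.gibbsMeasure n t (ball x r) ≤ C * ENNReal.ofReal (r ^ t) := by
  obtain ⟨M, hMtop, hM⟩ := Φ.exists_encard_largeWords_le
  set S := ∑' k, Nat.card (Φ.I k) / Φ.Z (k + 1) t
  refine ⟨1 + S * (M * ENNReal.ofReal (Φ.K ^ t)), by finiteness, fun n x r hr hnr => ?_⟩
  rw [add_mul, one_mul]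
  rcases le_or_gt 1 r with hr1 | hr1
  · refine le_add_right (prob_le_one.trans ?_)
    exact ENNReal.one_le_ofReal.mpr (Real.one_le_rpow hr1 ht)
  · refine le_add_left ?_
    calc Φ.gibbsMeasure n t (ball x r)
        ≤ (Φ.Z n t)⁻¹ * (S * (M * ENNReal.ofReal (Φ.K ^ t) * ENNReal.ofReal (r ^ t) * Φ.Z n t)) :=
          (gibbsMeasure_apply_le measurableSet_ball).trans <| mul_le_mul_right
            (tsum_weight_meeting_ball_le ht hnr hr1 fun k => hM 0 k x r hr) _
      _ = (Φ.Z n t)⁻¹ * Φ.Z n t *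
            (S * (M * ENNReal.ofReal (Φ.K ^ t)) * ENNReal.ofReal (r ^ t)) := by
          ring
      _ = S * (M * ENNReal.ofReal (Φ.K ^ t)) * ENNReal.ofReal (r ^ t) := by
          rw [ENNReal.inv_mul_cancel (Z_ne_zero n t) (Z_ne_top n t), one_mul]

end GibbsMeasure

section LowerBound

variable {d : ℕ} {Φ : NCIFS d} {t : ℝ}

variable (Φ) in
lemma antitone_iUnion_cell : Antitone fun n => ⋃ ω : Φ.Word 0 n, cell ω := fun k _ hkn =>
  iUnion_subset fun ω => (cell_subset_cell_take k.zero_le hkn ω).trans (subset_iUnion _ _)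

variable [∀ n, Finite (Φ.I n)]

lemma isCompact_iUnion_cell (n : ℕ) : IsCompact (⋃ ω : Φ.Word 0 n, cell ω) :=
  isCompact_iUnion isCompact_cell

lemma eventually_card_le_exp
    (hsub : Tendsto (fun n : ℕ => Real.log (Nat.card (Φ.I n)) / n) atTop (𝓝 0)) {a : ℝ}
    (ha : 0 < a) : ∀ᶠ n : ℕ in atTop, (Nat.card (Φ.I n) : ℝ) ≤ Real.exp (a * n) := by
  filter_upwards [hsub.eventually_lt_const ha, eventually_gt_atTop 0] with n hn hn0
  have := Φ.hI_ne n
  have hcard : (0 : ℝ) < Nat.card (Φ.I n) := by exact_mod_cast Nat.card_pos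
  rw [← Real.log_le_iff_le_exp hcard]
  exact ((div_lt_iff₀ (by exact_mod_cast hn0)).mp hn).le

lemma tsum_card_div_Z_ne_top
    (hsub : Tendsto (fun n : ℕ => Real.log (Nat.card (Φ.I n)) / n) atTop (𝓝 0))
    (hpos : 0 < Φ.lowP t) : ∑' k, Nat.card (Φ.I k) / Φ.Z (k + 1) t ≠ ∞ := by
  obtain ⟨a, ha, haP⟩ := EReal.lt_iff_exists_real_btwn.mp hpos
  have ha' : 0 < a := EReal.coe_pos.mp ha
  refine tsum_ne_top_of_eventually_le_ofReal
    (g := fun k : ℕ => Real.exp (k * (-(a / 2)))) (fun k => ?_)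
    (Real.summable_exp_nat_mul_iff.mpr (by linarith)) ?_
  · exact ENNReal.div_ne_top (ENNReal.natCast_ne_top _) (Z_ne_zero _ _)
  filter_upwards [eventually_card_le_exp hsub (half_pos ha'),
    (tendsto_add_atTop_nat 1).eventually (eventually_lt_Z_of_lt_lowP haP)] with k hcard hZ
  calc (Nat.card (Φ.I k) : ℝ≥0∞) / Φ.Z (k + 1) t
      ≤ ENNReal.ofReal (Real.exp (a / 2 * k)) / ENNReal.ofReal (Real.exp (a * (k + 1 : ℕ))) := by
        rw [← ENNReal.ofReal_natCast]
        gcongr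
    _ = ENNReal.ofReal (Real.exp (a / 2 * k - a * (k + 1 : ℕ))) := by
        rw [← ENNReal.ofReal_div_of_pos (Real.exp_pos _), Real.exp_sub]
    _ ≤ ENNReal.ofReal (Real.exp (k * (-(a / 2)))) := by
        gcongr
        push_cast
        linarith

lemma hausdorffMeasure_limitSet_ne_zero
    (hsub : Tendsto (fun n : ℕ => Real.log (Nat.card (Φ.I n)) / n) atTop (𝓝 0)) (ht : 0 < t)
    (hpos : 0 < Φ.lowP t) : μH[t] Φ.limitSet ≠ 0 := by
  obtain ⟨C, hC, hball⟩ := Φ.exists_gibbsMeasure_ball_le ht.le (tsum_card_div_Z_ne_top hsub hpos)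
  exact hausdorffMeasure_iInter_ne_zero_of_measure_ball_le Φ.antitone_iUnion_cell
    isCompact_iUnion_cell (fun n => gibbsMeasure_compl_iUnion_cell n t
      (isCompact_iUnion_cell n).measurableSet) Φ.tendsto_pow_η ht hC hball

lemma Bdim_le_dimH_limitSet
    (hsub : Tendsto (fun n : ℕ => Real.log (Nat.card (Φ.I n)) / n) atTop (𝓝 0)) :
    Φ.Bdim ≤ dimH Φ.limitSet := by
  refine iSup_le fun ⟨t, ht, hpos⟩ => ?_
  rcases ht.eq_or_lt with rfl | ht
  · simp
  lift t to NNReal using ht.le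
  rw [ENNReal.ofReal_coe_nnreal]
  exact le_dimH_of_hausdorffMeasure_ne_zero (hausdorffMeasure_limitSet_ne_zero hsub ht hpos)

end LowerBound

end NCIFS

/-- (Bowen's formula for systems of sub-exponential growth.) If a finite
NCIFS is subexponentially bounded, i.e. `lim (1/n) log #I^{(n)} = 0`, then Bowen's formula
holds: `HD(J(Φ)) = B(Φ)`. -/
theorem NCIFS.bowen_subexponential {d : ℕ} (Φ : NCIFS d) [∀ n, Finite (Φ.I n)]
    (hsub : Tendsto (fun n : ℕ => Real.log (Nat.card (Φ.I n)) / n) atTop (𝓝 0)) :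
    dimH Φ.limitSet = Φ.Bdim := by
  exact le_antisymm Φ.dimH_limitSet_le_Bdim (Bdim_le_dimH_limitSet hsub)
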